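/- Let R be a weakly orthogonal TRS, t a (possibly infinite) term, and U a set of pairwise non-overlapping redexes of t having a (strongly convergent) complete development. If u ∈ U is a Y-redex of t, then the complete development of U and the complete development of U∖{u} result in the same term. -/

import Mathlib

open PFunctor

universe u

variable (F : Type) (ar : F → ℕ)

/-- The polynomial functor whose M-type is the type of possibly infinite
terms over the signature `F` (with arities `ar`) and variables `ℕ`:
a node is either a function symbol (with `ar f` children) or a variable
(with no children). -/
abbrev TermPF : PFunctor.{0} :=
  ⟨F ⊕ ℕ, fun a => Fin (Sum.elim ar (fun _ => 0) a)⟩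

/-- Possibly infinite terms (coinductive trees) over signature `F`. -/
def ITerm : Type := (TermPF F ar).M

/-- Finite terms over signature `F`, used for left-hand sides of rules. -/
inductive FTerm : Type
  | var : ℕ → FTerm
  | app : (f : F) → (Fin (ar f) → FTerm) → FTerm

variable {F ar}

/-- Embedding of finite terms into possibly infinite terms. -/
def FTerm.toI : FTerm F ar → ITerm F ar
  | .var x => M.mk ⟨Sum.inr x, fun i => i.elim0⟩
  | .app f c => M.mk ⟨Sum.inl f, fun i => (c i).toI⟩

/-- Application of a substitution `σ` to a possibly infinite term: every
variable node `x` is replaced by the term `σ x` (corecursively; the marker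
records whether we are already inside a substituted term). -/
def substI (σ : ℕ → ITerm F ar) (t : ITerm F ar) : ITerm F ar :=
  M.corec (fun s : Bool × ITerm F ar =>
    if s.1 then ⟨(M.dest s.2).1, fun i => (true, (M.dest s.2).2 i)⟩
    else
      match M.dest s.2 with
      | ⟨Sum.inl f, cs⟩ => ⟨Sum.inl f, fun i => (false, cs i)⟩
      | ⟨Sum.inr x, _⟩ => ⟨(M.dest (σ x)).1, fun i => (true, (M.dest (σ x)).2 i)⟩)
    (false, t)

/-- The subterm of a term at a position (a list of argument indices),
if the position exists. -/
def subAt? : List ℕ → ITerm F ar → Option (ITerm F ar)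
  | [], t => some t
  | i :: p, t =>
      if h : i < Sum.elim ar (fun _ => 0) (M.dest t).1 then
        subAt? p ((M.dest t).2 ⟨i, h⟩)
      else none

/-- The symbol (function symbol or variable) at a position of a term. -/
def symAt? (t : ITerm F ar) (p : List ℕ) : Option (F ⊕ ℕ) :=
  (subAt? p t).map fun u => (M.dest u).1

/-- `replaceAt t p u` is the term obtained from `t` by replacing the subterm
at position `p` by `u` (defined corecursively). -/
def replaceAt (t : ITerm F ar) (p : List ℕ) (u : ITerm F ar) : ITerm F ar :=
  M.corec (fun s : (List ℕ × ITerm F ar) ⊕ ITerm F ar =>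
    match s with
    | Sum.inl ([], _) => ⟨(M.dest u).1, fun i => Sum.inr ((M.dest u).2 i)⟩
    | Sum.inl (i :: p', v) =>
        ⟨(M.dest v).1, fun j =>
          if (j : ℕ) = i then Sum.inl (p', (M.dest v).2 j)
          else Sum.inr ((M.dest v).2 j)⟩
    | Sum.inr v => ⟨(M.dest v).1, fun i => Sum.inr ((M.dest v).2 i)⟩)
    (Sum.inl (p, t))

/-- The list of variable occurrences of a finite term (from left to right). -/
def FTerm.varsList : FTerm F ar → List ℕ
  | .var x => [x]
  | .app _ c => (List.ofFn fun i => (c i).varsList).flatten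

/-- The pattern positions of a finite term: the positions carrying a function
symbol (non-variable positions). -/
def FTerm.patPos : FTerm F ar → Set (List ℕ)
  | .var _ => ∅
  | .app f c => {[]} ∪ ⋃ i : Fin (ar f), (fun q => (i : ℕ) :: q) '' (c i).patPos

/-- The positions of the variable `x` in a finite term. -/
def FTerm.varPos : FTerm F ar → ℕ → Set (List ℕ)
  | .var y, x => if y = x then {[]} else ∅
  | .app f c, x => ⋃ i : Fin (ar f), (fun q => (i : ℕ) :: q) '' (c i).varPos x

variable (F ar)

/-- An infinitary rewrite rule: a finite left-hand side that is not a
variable, and a possibly infinite right-hand side all of whose variables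
occur in the left-hand side. -/
structure Rule : Type where
  lhs : FTerm F ar
  rhs : ITerm F ar
  lhs_nonvar : ∀ x, lhs ≠ .var x
  varcond : ∀ x p, symAt? rhs p = some (Sum.inr x) → x ∈ lhs.varsList

variable {F ar}

/-- A rule is left-linear if no variable occurs twice in its left-hand side. -/
def Rule.LeftLinear (ρ : Rule F ar) : Prop := ρ.lhs.varsList.Nodup

/-- A rule is collapsing if its right-hand side is a variable. -/
def Rule.Collapsing (ρ : Rule F ar) : Prop := ∃ x, (M.dest ρ.rhs).1 = Sum.inr x

variable (F ar)

/-- A (candidate) redex: a position, a rule and a matching substitution. -/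
structure Rdx : Type where
  pos : List ℕ
  rule : Rule F ar
  sub : ℕ → ITerm F ar

variable {F ar}

/-- `u.In R t`: `u` is a redex of the term `t` with respect to the rewrite
system `R`: its rule belongs to `R` and the subterm of `t` at `u.pos` is the
corresponding instance of the left-hand side. -/
def Rdx.In (u : Rdx F ar) (R : Set (Rule F ar)) (t : ITerm F ar) : Prop :=
  u.rule ∈ R ∧ subAt? u.pos t = some (substI u.sub u.rule.lhs.toI)

/-- The result of contracting the redex `u` in the term `t`. -/
def Rdx.result (u : Rdx F ar) (t : ITerm F ar) : ITerm F ar :=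
  replaceAt t u.pos (substI u.sub u.rule.rhs)

/-- Two redexes overlap if their patterns share a position. -/
def Rdx.Overlaps (u v : Rdx F ar) : Prop :=
  ∃ q, (∃ r ∈ u.rule.lhs.patPos, q = u.pos ++ r) ∧
    (∃ r ∈ v.rule.lhs.patPos, q = v.pos ++ r)

/-- A weakly orthogonal iTRS: all rules are left-linear and all critical
pairs are trivial, i.e. contracting either of two overlapping redexes of a
term always yields the same result. -/
def WeaklyOrthogonal (R : Set (Rule F ar)) : Prop :=
  (∀ ρ ∈ R, ρ.LeftLinear) ∧
  ∀ (t : ITerm F ar) (u v : Rdx F ar),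
    u.In R t → v.In R t → u.Overlaps v → u.result t = v.result t

/-- The overlap relation on the redexes of a fixed term `t`. -/
def OverlapIn {F : Type} {ar : F → ℕ} (R : Set (Rule F ar)) (t : ITerm F ar)
    (u v : Rdx F ar) : Prop :=
  u.In R t ∧ v.In R t ∧ u.Overlaps v

/-- Two positions are disjoint if neither is a prefix of the other. -/
def DisjPos (p q : List ℕ) : Prop := ¬ p <+: q ∧ ¬ q <+: p

/-- `u` is a Y-redex of `t`: `u` is a redex of `t` that is connected by chains
of pattern overlaps (within `t`) to two redexes `v₁`, `v₂` of `t` at disjoint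
positions. -/
def YRedex {F : Type} {ar : F → ℕ} (R : Set (Rule F ar)) (t : ITerm F ar)
    (u : Rdx F ar) : Prop :=
  u.In R t ∧ ∃ v₁ v₂ : Rdx F ar, v₁.In R t ∧ v₂.In R t ∧
    Relation.ReflTransGen (OverlapIn R t) u v₁ ∧
    Relation.ReflTransGen (OverlapIn R t) u v₂ ∧
    DisjPos v₁.pos v₂.pos

/-- `agreeTo d t s`: the terms `t` and `s` carry the same symbols at all
positions of depth `< d`. -/
def agreeTo {F : Type} {ar : F → ℕ} (d : ℕ) (t s : ITerm F ar) : Prop :=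
  ∀ p : List ℕ, p.length < d → symAt? t p = symAt? s p

/-- `mapPos ρ p q`: the residual positions of a position `q` after contracting
a redex with rule `ρ` at position `p` (for redexes not overlapping the
contracted one): positions not below `p` stay put, and a position passing
through the occurrence of a variable `x` in the left-hand side is moved to
the corresponding occurrences of `x` in the right-hand side. -/
def mapPos {F : Type} {ar : F → ℕ} (ρ : Rule F ar) (p q : List ℕ) :
    Set (List ℕ) :=
  {q' | (¬ p <+: q ∧ q' = q) ∨
    ∃ x v w v', q = p ++ v ++ w ∧ v ∈ ρ.lhs.varPos x ∧
      symAt? ρ.rhs v' = some (Sum.inr x) ∧ q' = p ++ v' ++ w}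

/-- The residuals of a set `V` of redexes after contracting the redex `u`,
in the resulting term `t'`. -/
def residuals {F : Type} {ar : F → ℕ} (R : Set (Rule F ar)) (u : Rdx F ar)
    (V : Set (Rdx F ar)) (t' : ITerm F ar) : Set (Rdx F ar) :=
  {v' | ∃ v ∈ V, v'.rule = v.rule ∧ v'.pos ∈ mapPos u.rule u.pos v.pos ∧
    v'.In R t'}

/-- `CompDev R t U s`: there is a (strongly convergent) complete development
of the set `U` of redexes of `t` with result `s`: an `ω`-sequence of steps,
each contracting a residual of `U` (the sets `Us n` track the remaining
residuals; a trivial stage is allowed only when no residuals remain, so that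
finite complete developments are included), such that the depths of the
remaining residuals tend to infinity (strong convergence and completeness:
in the limit no residual remains at any finite depth) and the terms converge
to `s`. -/
def CompDev {F : Type} {ar : F → ℕ} (R : Set (Rule F ar)) (t : ITerm F ar)
    (U : Set (Rdx F ar)) (s : ITerm F ar) : Prop :=
  ∃ (g : ℕ → ITerm F ar) (Us : ℕ → Set (Rdx F ar)),
    g 0 = t ∧ Us 0 = U ∧
    (∀ n, (Us n = ∅ ∧ g (n + 1) = g n ∧ Us (n + 1) = ∅) ∨
      ∃ u ∈ Us n, u.In R (g n) ∧ g (n + 1) = u.result (g n) ∧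
        Us (n + 1) = residuals R u (Us n \ {u}) (g (n + 1))) ∧
    (∀ d : ℕ, ∃ N, ∀ n ≥ N, ∀ u ∈ Us n, d ≤ u.pos.length) ∧
    (∀ d : ℕ, ∃ N, ∀ n ≥ N, agreeTo d (g n) s)

namespace ITerm

/-- The term with root symbol `a` and immediate subterms `c`. -/
def node (a : F ⊕ ℕ) (c : Fin (Sum.elim ar (fun _ => 0) a) → ITerm F ar) : ITerm F ar :=
  M.mk ⟨a, c⟩

theorem exists_node (t : ITerm F ar) : ∃ a c, t = node a c :=
  ⟨(M.dest t).1, (M.dest t).2, (M.mk_dest t).symm⟩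

theorem node_cases (t : ITerm F ar) :
    (∃ f c, t = node (Sum.inl f) c) ∨ ∃ x c, t = node (Sum.inr x) c := by
  obtain ⟨f | x, c, rfl⟩ := exists_node t
  · exact Or.inl ⟨f, c, rfl⟩
  · exact Or.inr ⟨x, c, rfl⟩

theorem dest_node (a : F ⊕ ℕ) (c : Fin (Sum.elim ar (fun _ => 0) a) → ITerm F ar) :
    M.dest (node a c) = (⟨a, c⟩ : (TermPF F ar) (ITerm F ar)) :=
  M.dest_mk _

theorem eq_node_of_dest {t : ITerm F ar} {a : F ⊕ ℕ}
    {c : Fin (Sum.elim ar (fun _ => 0) a) → ITerm F ar}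
    (h : M.dest t = (⟨a, c⟩ : (TermPF F ar) (ITerm F ar))) : t = node a c :=
  (M.mk_dest t).symm.trans (congrArg M.mk h)

theorem subAt?_node_cons (a : F ⊕ ℕ) (c : Fin (Sum.elim ar (fun _ => 0) a) → ITerm F ar)
    (i : ℕ) (p : List ℕ) :
    subAt? (i :: p) (node a c) =
      if hi : i < Sum.elim ar (fun _ => 0) a then subAt? p (c ⟨i, hi⟩) else none := by
  rw [subAt?, dest_node]

theorem symAt?_nil (t : ITerm F ar) : symAt? t [] = some (M.dest t).1 :=
  rfl

theorem symAt?_node_nil (a : F ⊕ ℕ) (c : Fin (Sum.elim ar (fun _ => 0) a) → ITerm F ar) :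
    symAt? (node a c) [] = some a := by
  rw [symAt?_nil, dest_node]

theorem symAt?_node_cons (a : F ⊕ ℕ) (c : Fin (Sum.elim ar (fun _ => 0) a) → ITerm F ar)
    (i : ℕ) (p : List ℕ) :
    symAt? (node a c) (i :: p) =
      if hi : i < Sum.elim ar (fun _ => 0) a then symAt? (c ⟨i, hi⟩) p else none := by
  rw [symAt?, subAt?_node_cons]
  split <;> rfl

theorem symAt?_var_cons (x : ℕ)
    (c : Fin (Sum.elim ar (fun _ => 0) (Sum.inr x : F ⊕ ℕ)) → ITerm F ar)
    (i : ℕ) (p : List ℕ) : symAt? (node (Sum.inr x) c) (i :: p) = none := by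
  rw [symAt?_node_cons]
  exact dif_neg (Nat.not_lt_zero _)

/-- A term is determined by the symbols at its positions. -/
theorem ext_symAt? {s t : ITerm F ar} (h : ∀ p, symAt? s p = symAt? t p) : s = t := by
  refine M.bisim (P := TermPF F ar) (fun s t : ITerm F ar => ∀ p, symAt? s p = symAt? t p)
    ?_ s t h
  intro s t h
  obtain ⟨a, c, rfl⟩ := exists_node s
  obtain ⟨b, e, rfl⟩ := exists_node t
  have h0 := h []
  rw [symAt?_node_nil, symAt?_node_nil] at h0
  obtain rfl : a = b := by simpa using h0
  refine ⟨a, c, e, dest_node a c, dest_node a e, fun i p => ?_⟩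
  have hp := h (i :: p)
  rw [symAt?_node_cons, symAt?_node_cons, dif_pos i.2, dif_pos i.2] at hp
  exact hp

theorem subAt?_append (p q : List ℕ) (t : ITerm F ar) :
    subAt? (p ++ q) t = (subAt? p t).bind (subAt? q) := by
  induction p generalizing t with
  | nil => rfl
  | cons i p ih =>
    obtain ⟨a, c, rfl⟩ := exists_node t
    rw [List.cons_append, subAt?_node_cons, subAt?_node_cons]
    split
    · exact ih _
    · rfl

theorem symAt?_append {p : List ℕ} {t s : ITerm F ar} (h : subAt? p t = some s) (q : List ℕ) :
    symAt? t (p ++ q) = symAt? s q := by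
  rw [symAt?, subAt?_append, h]
  rfl

theorem symAt?_eq_of_subAt? {p : List ℕ} {t s : ITerm F ar} (h : subAt? p t = some s) :
    symAt? t p = symAt? s [] := by
  simpa using symAt?_append h []

theorem exists_subAt? {t : ITerm F ar} {p : List ℕ} {a : F ⊕ ℕ} (h : symAt? t p = some a) :
    ∃ s, subAt? p t = some s := by
  cases hs : subAt? p t with
  | none =>
    rw [symAt?, hs] at h
    exact absurd h (by rintro ⟨⟩)
  | some s => exact ⟨s, rfl⟩

theorem symAt?_prefix {t : ITerm F ar} {p q : List ℕ} {a : F ⊕ ℕ}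
    (h : symAt? t (p ++ q) = some a) (hq : q ≠ []) : ∃ f, symAt? t p = some (Sum.inl f) := by
  obtain ⟨s, hs⟩ := exists_subAt? h
  rw [subAt?_append, Option.bind_eq_some_iff] at hs
  obtain ⟨s', hs', -⟩ := hs
  obtain ⟨i, q, rfl⟩ := List.exists_cons_of_ne_nil hq
  rcases node_cases s' with ⟨f, c, rfl⟩ | ⟨x, c, rfl⟩
  · exact ⟨f, by rw [symAt?_eq_of_subAt? hs', symAt?_node_nil]⟩
  · rw [symAt?_append hs', symAt?_var_cons] at h
    simp at h

theorem symAt?_isSome_prefix {t : ITerm F ar} {p q : List ℕ} {a : F ⊕ ℕ}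
    (h : symAt? t (p ++ q) = some a) : ∃ b, symAt? t p = some b := by
  by_cases hq : q = []
  · exact ⟨a, by simpa [hq] using h⟩
  · obtain ⟨f, hf⟩ := symAt?_prefix h hq
    exact ⟨_, hf⟩

/-- Variable positions are leaves. -/
theorem append_eq_of_var {t : ITerm F ar} {p q : List ℕ} {x : ℕ} {a : F ⊕ ℕ}
    (hp : symAt? t p = some (Sum.inr x)) (h : symAt? t (p ++ q) = some a) : q = [] := by
  by_contra hq
  obtain ⟨f, hf⟩ := symAt?_prefix h hq
  simp [hp] at hf

theorem corec_eq_node {X : Type} {g : X → (TermPF F ar) X} {x : X} {a : F ⊕ ℕ}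
    {k : Fin (Sum.elim ar (fun _ => 0) a) → X} (h : g x = ⟨a, k⟩) :
    (M.corec g x : ITerm F ar) = node a fun i => M.corec g (k i) :=
  eq_node_of_dest ((M.dest_corec g x).trans (by rw [h]; rfl))

theorem substI_app (σ : ℕ → ITerm F ar) (f : F)
    (c : Fin (Sum.elim ar (fun _ => 0) (Sum.inl f : F ⊕ ℕ)) → ITerm F ar) :
    substI σ (node (Sum.inl f) c) = node (Sum.inl f) fun i => substI σ (c i) :=
  corec_eq_node ((if_neg Bool.false_ne_true).trans (by dsimp only; rw [dest_node]))

theorem corec_eq_self {X : Type} (g : X → (TermPF F ar) X) (e : ITerm F ar → X)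
    (hg : ∀ v, g (e v) = ⟨(M.dest v).1, fun i => e ((M.dest v).2 i)⟩) (v : ITerm F ar) :
    M.corec g (e v) = v := by
  refine M.bisim (P := TermPF F ar) (fun s t : ITerm F ar => s = M.corec g (e t)) ?_ _ _ rfl
  intro s t hs
  refine ⟨(M.dest t).1, fun i => M.corec g (e ((M.dest t).2 i)), (M.dest t).2, ?_, rfl,
    fun i => rfl⟩
  have hd := M.dest_corec g (e t)
  rw [hg t] at hd
  exact (congrArg M.dest hs).trans hd

theorem substI_var (σ : ℕ → ITerm F ar) (x : ℕ)
    (c : Fin (Sum.elim ar (fun _ => 0) (Sum.inr x : F ⊕ ℕ)) → ITerm F ar) :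
    substI σ (node (Sum.inr x) c) = σ x := by
  refine (corec_eq_node (a := (M.dest (σ x)).1) (k := fun i => (true, (M.dest (σ x)).2 i))
    ((if_neg Bool.false_ne_true).trans (by dsimp only; rw [dest_node]; rfl))).trans ?_
  refine (congrArg _ (funext fun i => ?_)).trans (eq_node_of_dest rfl).symm
  exact corec_eq_self _ (fun v => (true, v)) (fun v => if_pos rfl) _

theorem symAt?_substI_of_app (σ : ℕ → ITerm F ar) {t : ITerm F ar} {p : List ℕ} {f : F}
    (h : symAt? t p = some (Sum.inl f)) : symAt? (substI σ t) p = some (Sum.inl f) := by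
  induction p generalizing t with
  | nil =>
    rcases node_cases t with ⟨g, c, rfl⟩ | ⟨x, c, rfl⟩
    · rw [symAt?_node_nil] at h
      rw [substI_app, symAt?_node_nil, h]
    · simp [symAt?_node_nil] at h
  | cons i p ih =>
    rcases node_cases t with ⟨g, c, rfl⟩ | ⟨x, c, rfl⟩
    · rw [symAt?_node_cons] at h
      rw [substI_app, symAt?_node_cons]
      split at h
      case isTrue hi => rw [dif_pos hi]; exact ih h
      case isFalse => simp at h
    · simp [symAt?_var_cons] at h

theorem subAt?_substI_of_var (σ : ℕ → ITerm F ar) {t : ITerm F ar} {p : List ℕ} {x : ℕ}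
    (h : symAt? t p = some (Sum.inr x)) : subAt? p (substI σ t) = some (σ x) := by
  induction p generalizing t with
  | nil =>
    rcases node_cases t with ⟨g, c, rfl⟩ | ⟨y, c, rfl⟩
    · simp [symAt?_node_nil] at h
    · rw [symAt?_node_nil] at h
      obtain rfl : y = x := by simpa using h
      rw [substI_var]
      rfl
  | cons i p ih =>
    rcases node_cases t with ⟨g, c, rfl⟩ | ⟨y, c, rfl⟩
    · rw [symAt?_node_cons] at h
      rw [substI_app, subAt?_node_cons]
      split at h
      case isTrue hi => rw [dif_pos hi]; exact ih h
      case isFalse => simp at h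
    · simp [symAt?_var_cons] at h

/-- Every position of an instance of `t` lies in `t` or below a variable of `t`. -/
theorem symAt?_substI_cases {σ : ℕ → ITerm F ar} {t : ITerm F ar} {p : List ℕ} {a : F ⊕ ℕ}
    (h : symAt? (substI σ t) p = some a) :
    (∃ f, symAt? t p = some (Sum.inl f)) ∨
      ∃ x v w, p = v ++ w ∧ symAt? t v = some (Sum.inr x) := by
  induction p generalizing t with
  | nil =>
    rcases node_cases t with ⟨f, c, rfl⟩ | ⟨x, c, rfl⟩
    · exact Or.inl ⟨f, symAt?_node_nil _ _⟩
    · exact Or.inr ⟨x, [], [], rfl, symAt?_node_nil _ _⟩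
  | cons i p ih =>
    rcases node_cases t with ⟨f, c, rfl⟩ | ⟨x, c, rfl⟩
    · rw [substI_app, symAt?_node_cons] at h
      split at h
      case isTrue hi =>
        rcases ih h with ⟨g, hg⟩ | ⟨x, v, w, rfl, hv⟩
        · exact Or.inl ⟨g, by rw [symAt?_node_cons, dif_pos hi, hg]⟩
        · exact Or.inr ⟨x, i :: v, w, rfl, by rw [symAt?_node_cons, dif_pos hi, hv]⟩
      case isFalse => simp at h
    · exact Or.inr ⟨x, [], i :: p, rfl, symAt?_node_nil _ _⟩

theorem replaceAt_nil (t u : ITerm F ar) : replaceAt t [] u = u := by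
  refine (corec_eq_node rfl).trans ?_
  refine (congrArg _ (funext fun i => ?_)).trans (eq_node_of_dest rfl).symm
  exact corec_eq_self _ Sum.inr (fun v => rfl) _

theorem replaceAt_cons (u : ITerm F ar) (a : F ⊕ ℕ)
    (c : Fin (Sum.elim ar (fun _ => 0) a) → ITerm F ar) (i : ℕ) (p : List ℕ) :
    replaceAt (node a c) (i :: p) u =
      node a fun j => if (j : ℕ) = i then replaceAt (c j) p u else c j := by
  refine (corec_eq_node
    (k := fun j => if (j : ℕ) = i then Sum.inl (p, c j) else Sum.inr (c j))
    (by dsimp only; rw [dest_node])).trans (congrArg _ (funext fun j => ?_))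
  by_cases hj : (j : ℕ) = i
  · rw [if_pos hj, if_pos hj]
    rfl
  · rw [if_neg hj, if_neg hj]
    exact corec_eq_self _ Sum.inr (fun v => rfl) _

theorem subAt?_replaceAt_self {t s : ITerm F ar} (u : ITerm F ar) {p : List ℕ}
    (h : subAt? p t = some s) : subAt? p (replaceAt t p u) = some u := by
  induction p generalizing t with
  | nil => rw [replaceAt_nil]; rfl
  | cons i p ih =>
    obtain ⟨a, c, rfl⟩ := exists_node t
    rw [subAt?_node_cons] at h
    rw [replaceAt_cons, subAt?_node_cons]
    split at h
    case isTrue hi =>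
      rw [dif_pos hi, if_pos rfl]
      exact ih h
    case isFalse => simp at h

theorem symAt?_replaceAt_of_not_prefix (t u : ITerm F ar) {p q : List ℕ} (h : ¬ p <+: q) :
    symAt? (replaceAt t p u) q = symAt? t q := by
  induction p generalizing t q with
  | nil => simp at h
  | cons i p ih =>
    obtain ⟨a, c, rfl⟩ := exists_node t
    rw [replaceAt_cons]
    cases q with
    | nil => rw [symAt?_node_nil, symAt?_node_nil]
    | cons j q =>
      rw [symAt?_node_cons, symAt?_node_cons]
      split
      case isTrue hj =>
        by_cases hij : j = i
        · subst hij
          rw [if_pos rfl]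
          exact ih _ (by simpa using h)
        · rw [if_neg (show ¬ ((⟨j, hj⟩ : Fin _) : ℕ) = i from hij)]
      case isFalse => rfl

end ITerm

namespace FTerm

theorem toI_var (x : ℕ) :
    (FTerm.var x : FTerm F ar).toI = ITerm.node (Sum.inr x) fun i => i.elim0 :=
  rfl

theorem toI_app (f : F) (c : Fin (ar f) → FTerm F ar) :
    (FTerm.app f c).toI = ITerm.node (Sum.inl f) fun i => (c i).toI :=
  rfl

theorem symAt?_toI_var_nil (x : ℕ) :
    symAt? (FTerm.var x : FTerm F ar).toI [] = some (Sum.inr x) :=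
  ITerm.symAt?_node_nil _ _

theorem symAt?_toI_var_cons (x i : ℕ) (p : List ℕ) :
    symAt? (FTerm.var x : FTerm F ar).toI (i :: p) = none :=
  ITerm.symAt?_var_cons _ _ _ _

theorem symAt?_toI_app_nil (f : F) (c : Fin (ar f) → FTerm F ar) :
    symAt? (FTerm.app f c).toI [] = some (Sum.inl f) :=
  ITerm.symAt?_node_nil _ _

theorem symAt?_toI_app_cons (f : F) (c : Fin (ar f) → FTerm F ar) (i : ℕ) (p : List ℕ) :
    symAt? (FTerm.app f c).toI (i :: p) =
      if hi : i < ar f then symAt? (c ⟨i, hi⟩).toI p else none := by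
  rw [toI_app, ITerm.symAt?_node_cons]
  rfl

theorem mem_patPos_iff {l : FTerm F ar} {r : List ℕ} :
    r ∈ l.patPos ↔ ∃ f, symAt? l.toI r = some (Sum.inl f) := by
  induction l generalizing r with
  | var x =>
    cases r with
    | nil => simp [patPos, symAt?_toI_var_nil]
    | cons i r => simp [patPos, symAt?_toI_var_cons]
  | app f c ih =>
    cases r with
    | nil => simp [patPos, symAt?_toI_app_nil]
    | cons i r =>
      simp only [patPos, symAt?_toI_app_cons, Set.mem_union, Set.mem_singleton_iff,
        reduceCtorEq, false_or, Set.mem_iUnion, Set.mem_image, List.cons.injEq]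
      constructor
      · rintro ⟨j, q, hq, rfl, rfl⟩
        simpa using (ih j).1 hq
      · rintro ⟨g, hg⟩
        split at hg
        case isTrue hi => exact ⟨⟨i, hi⟩, r, (ih _).2 ⟨g, hg⟩, rfl, rfl⟩
        case isFalse => simp at hg

theorem mem_varPos_iff {l : FTerm F ar} {x : ℕ} {r : List ℕ} :
    r ∈ l.varPos x ↔ symAt? l.toI r = some (Sum.inr x) := by
  induction l generalizing r with
  | var y =>
    cases r with
    | nil =>
      rw [symAt?_toI_var_nil, varPos]
      split <;> simp_all
    | cons i r =>
      rw [symAt?_toI_var_cons, varPos]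
      split <;> simp
  | app f c ih =>
    cases r with
    | nil => simp [varPos, symAt?_toI_app_nil]
    | cons i r =>
      simp only [varPos, symAt?_toI_app_cons, Set.mem_iUnion, Set.mem_image, List.cons.injEq]
      constructor
      · rintro ⟨j, q, hq, rfl, rfl⟩
        simpa using (ih j).1 hq
      · intro hg
        split at hg
        case isTrue hi => exact ⟨⟨i, hi⟩, r, (ih _).2 hg, rfl, rfl⟩
        case isFalse => simp at hg

theorem mem_varsList_iff {l : FTerm F ar} {x : ℕ} :
    x ∈ l.varsList ↔ ∃ r, r ∈ l.varPos x := by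
  induction l with
  | var y =>
    simp only [varsList, varPos, List.mem_singleton]
    split <;> simp_all [eq_comm]
  | app f c ih =>
    simp only [varsList, varPos, List.mem_flatten, List.mem_ofFn, Set.mem_iUnion, Set.mem_image]
    constructor
    · rintro ⟨_, ⟨i, rfl⟩, hx⟩
      obtain ⟨r, hr⟩ := (ih i).1 hx
      exact ⟨_, i, r, hr, rfl⟩
    · rintro ⟨_, i, r, hr, rfl⟩
      exact ⟨_, ⟨i, rfl⟩, (ih i).2 ⟨r, hr⟩⟩

theorem varPos_unique {l : FTerm F ar} (hl : l.varsList.Nodup) {x : ℕ} {r r' : List ℕ}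
    (hr : r ∈ l.varPos x) (hr' : r' ∈ l.varPos x) : r = r' := by
  induction l generalizing r r' with
  | var y =>
    rw [varPos] at hr hr'
    split at hr
    · simp_all
    · simp at hr
  | app f c ih =>
    simp only [varsList, List.nodup_flatten, List.forall_mem_ofFn_iff, List.pairwise_ofFn] at hl
    simp only [varPos, Set.mem_iUnion, Set.mem_image] at hr hr'
    obtain ⟨i, q, hq, rfl⟩ := hr
    obtain ⟨j, q', hq', rfl⟩ := hr'
    have hi := mem_varsList_iff.2 ⟨q, hq⟩
    have hj := mem_varsList_iff.2 ⟨q', hq'⟩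
    rcases lt_trichotomy i j with hij | rfl | hij
    · exact absurd hj (hl.2 hij hi)
    · rw [ih i (hl.1 i) hq hq']
    · exact absurd hi (hl.2 hij hj)

theorem patPos_finite (l : FTerm F ar) : l.patPos.Finite := by
  induction l with
  | var x => exact Set.finite_empty
  | app f c ih => exact (Set.finite_singleton _).union (Set.finite_iUnion fun i => (ih i).image _)

theorem eq_substI_of_matches {l : FTerm F ar} {t : ITerm F ar} {σ : ℕ → ITerm F ar}
    (hsym : ∀ r f, symAt? l.toI r = some (Sum.inl f) → symAt? t r = some (Sum.inl f))
    (hσ : ∀ r x s, symAt? l.toI r = some (Sum.inr x) → subAt? r t = some s → σ x = s) :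
    t = substI σ l.toI := by
  induction l generalizing t with
  | var x =>
    rw [toI_var, ITerm.substI_var, hσ [] x t (symAt?_toI_var_nil x) rfl]
  | app f c ih =>
    obtain ⟨a, e, rfl⟩ := ITerm.exists_node t
    have h0 := hsym [] f (symAt?_toI_app_nil f c)
    rw [ITerm.symAt?_node_nil] at h0
    obtain rfl : a = Sum.inl f := by simpa using h0
    rw [toI_app, ITerm.substI_app]
    congr 1
    funext i
    have hi : (i : ℕ) < ar f := i.2
    apply ih i
    · intro r g hr
      have := hsym (i :: r) g (by rw [symAt?_toI_app_cons, dif_pos hi]; exact hr)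
      rwa [ITerm.symAt?_node_cons, dif_pos i.2] at this
    · intro r x s hr hs
      refine hσ (i :: r) x s (by rw [symAt?_toI_app_cons, dif_pos hi]; exact hr) ?_
      rwa [ITerm.subAt?_node_cons, dif_pos i.2]

/-- A linear finite term matches every term carrying its function symbols. -/
theorem exists_eq_substI {l : FTerm F ar} (hl : l.varsList.Nodup) {t : ITerm F ar}
    (hsym : ∀ r f, symAt? l.toI r = some (Sum.inl f) → symAt? t r = some (Sum.inl f)) :
    ∃ σ, t = substI σ l.toI := by
  classical
  have hσ : ∀ x, ∃ s, ∀ r s', symAt? l.toI r = some (Sum.inr x) → subAt? r t = some s' →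
      s = s' := by
    intro x
    by_cases h : ∃ r s, symAt? l.toI r = some (Sum.inr x) ∧ subAt? r t = some s
    · obtain ⟨r, s, hr, hs⟩ := h
      refine ⟨s, fun r' s' hr' hs' => ?_⟩
      obtain rfl := varPos_unique hl (mem_varPos_iff.2 hr) (mem_varPos_iff.2 hr')
      simpa [hs] using hs'
    · exact ⟨t, fun r s' hr hs => absurd ⟨r, s', hr, hs⟩ h⟩
  choose σ hσ using hσ
  exact ⟨σ, eq_substI_of_matches hsym fun r x s => hσ x r s⟩

end FTerm

theorem Rule.exists_symAt?_lhs_nil (ρ : Rule F ar) :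
    ∃ f, symAt? ρ.lhs.toI [] = some (Sum.inl f) := by
  rcases h : ρ.lhs with x | ⟨f, c⟩
  · exact absurd h (ρ.lhs_nonvar x)
  · exact ⟨f, FTerm.symAt?_toI_app_nil f c⟩

theorem Rule.nil_mem_patPos (ρ : Rule F ar) : [] ∈ ρ.lhs.patPos :=
  FTerm.mem_patPos_iff.2 ρ.exists_symAt?_lhs_nil

theorem Rule.exists_mem_varPos (ρ : Rule F ar) {x : ℕ} {p : List ℕ}
    (h : symAt? ρ.rhs p = some (Sum.inr x)) : ∃ v, v ∈ ρ.lhs.varPos x :=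
  FTerm.mem_varsList_iff.1 (ρ.varcond x p h)

namespace Rdx

variable {R : Set (Rule F ar)} {u : Rdx F ar} {t : ITerm F ar}

theorem In.symAt?_pattern (h : u.In R t) {r : List ℕ} {f : F}
    (hr : symAt? u.rule.lhs.toI r = some (Sum.inl f)) :
    symAt? t (u.pos ++ r) = some (Sum.inl f) := by
  rw [ITerm.symAt?_append h.2, ITerm.symAt?_substI_of_app _ hr]

theorem symAt?_result_of_not_prefix (u : Rdx F ar) (t : ITerm F ar) {q : List ℕ}
    (h : ¬ u.pos <+: q) : symAt? (u.result t) q = symAt? t q :=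
  ITerm.symAt?_replaceAt_of_not_prefix _ _ h

theorem In.subAt?_result (h : u.In R t) :
    subAt? u.pos (u.result t) = some (substI u.sub u.rule.rhs) :=
  ITerm.subAt?_replaceAt_self _ h.2

theorem In.symAt?_result_of_app (h : u.In R t) {v : List ℕ} {f : F}
    (hv : symAt? u.rule.rhs v = some (Sum.inl f)) :
    symAt? (u.result t) (u.pos ++ v) = some (Sum.inl f) := by
  rw [ITerm.symAt?_append h.subAt?_result, ITerm.symAt?_substI_of_app _ hv]

theorem In.symAt?_result_of_var (h : u.In R t) {v v' : List ℕ} {x : ℕ}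
    (hv : v ∈ u.rule.lhs.varPos x) (hv' : symAt? u.rule.rhs v' = some (Sum.inr x))
    (w : List ℕ) :
    symAt? (u.result t) (u.pos ++ v' ++ w) = symAt? t (u.pos ++ v ++ w) := by
  rw [List.append_assoc, List.append_assoc, ITerm.symAt?_append h.subAt?_result,
    ITerm.symAt?_append h.2, ITerm.symAt?_append (ITerm.subAt?_substI_of_var _ hv'),
    ITerm.symAt?_append (ITerm.subAt?_substI_of_var _ (FTerm.mem_varPos_iff.1 hv))]

end Rdx

section MapPos

variable {ρ : Rule F ar} {p q q' r : List ℕ}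

theorem not_mem_mapPos_self : q' ∉ mapPos ρ p p := by
  rintro (⟨h, -⟩ | ⟨x, v, w, v', h, hv, -, -⟩)
  · exact h List.prefix_rfl
  · obtain ⟨rfl, rfl⟩ : v = [] ∧ w = [] := by simpa [List.append_assoc] using h
    obtain ⟨f, hf⟩ := ρ.exists_symAt?_lhs_nil
    simp [FTerm.mem_varPos_iff.1 hv] at hf

theorem eq_of_mem_mapPos (hρ : ρ.LeftLinear) {q₁ q₂ : List ℕ} (h₁ : q' ∈ mapPos ρ p q₁)
    (h₂ : q' ∈ mapPos ρ p q₂) : q₁ = q₂ := by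
  rcases h₁ with ⟨hn₁, rfl⟩ | ⟨x, v₁, w₁, v₁', rfl, hv₁, hv₁', rfl⟩
  · rcases h₂ with ⟨hn₂, rfl⟩ | ⟨y, v₂, w₂, v₂', rfl, hv₂, hv₂', rfl⟩
    · rfl
    · exact absurd (by rw [List.append_assoc]; exact List.prefix_append _ _) hn₁
  · rcases h₂ with ⟨hn₂, rfl⟩ | ⟨y, v₂, w₂, v₂', rfl, hv₂, hv₂', h⟩
    · exact absurd (by rw [List.append_assoc]; exact List.prefix_append _ _) hn₂
    · rw [List.append_assoc, List.append_assoc, List.append_cancel_left_eq] at h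
      obtain ⟨rfl, rfl⟩ : v₁' = v₂' ∧ w₁ = w₂ := by
        rcases List.append_eq_append_iff.1 h with ⟨c, rfl, rfl⟩ | ⟨c, rfl, rfl⟩
        · obtain rfl := ITerm.append_eq_of_var hv₁' hv₂'
          simp
        · obtain rfl := ITerm.append_eq_of_var hv₂' hv₁'
          simp
      obtain rfl : x = y := by simpa [hv₁'] using hv₂'
      rw [FTerm.varPos_unique hρ hv₁ hv₂]

theorem append_mem_mapPos (h : q' ∈ mapPos ρ p q) (hr : p <+: q ++ r → p <+: q) :
    q' ++ r ∈ mapPos ρ p (q ++ r) := by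
  rcases h with ⟨hn, rfl⟩ | ⟨x, v, w, v', rfl, hv, hv', rfl⟩
  · exact Or.inl ⟨fun h => hn (hr h), rfl⟩
  · exact Or.inr ⟨x, v, w ++ r, v', by simp, hv, hv', by simp⟩

theorem append_not_mem_mapPos {f : F} {v : List ℕ} (h : symAt? ρ.rhs v = some (Sum.inl f)) :
    p ++ v ∉ mapPos ρ p q := by
  rintro (⟨hn, rfl⟩ | ⟨x, v₁, w, v', rfl, hv, hv', he⟩)
  · exact hn (List.prefix_append _ _)
  · rw [List.append_assoc, List.append_cancel_left_eq] at he
    subst he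
    obtain rfl := ITerm.append_eq_of_var hv' h
    simp [hv'] at h

theorem eq_of_mem_mapPos_of_not_prefix (h : q' ∈ mapPos ρ p q) (hn : ¬ p <+: q) : q' = q := by
  rcases h with ⟨-, rfl⟩ | ⟨x, v, w, v', rfl, -, -, -⟩
  · rfl
  · exact absurd (by rw [List.append_assoc]; exact List.prefix_append _ _) hn

end MapPos

theorem Rdx.In.symAt?_result_of_mem_mapPos {R : Set (Rule F ar)} {u : Rdx F ar}
    {t : ITerm F ar} (h : u.In R t) {q q' : List ℕ} (hq : q' ∈ mapPos u.rule u.pos q) :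
    symAt? (u.result t) q' = symAt? t q := by
  rcases hq with ⟨hn, rfl⟩ | ⟨x, v, w, v', rfl, hv, hv', rfl⟩
  · exact u.symAt?_result_of_not_prefix t hn
  · exact h.symAt?_result_of_var hv hv' w

/-- The position and the rule of a redex. -/
def Rdx.mark (u : Rdx F ar) : List ℕ × Rule F ar := (u.pos, u.rule)

/-- The rule `m.2` belongs to `R` and the function symbols of its left-hand side occur in `t`
at position `m.1`. -/
def IsRedexAt (R : Set (Rule F ar)) (t : ITerm F ar) (m : List ℕ × Rule F ar) : Prop :=
  m.2 ∈ R ∧ ∀ r f, symAt? m.2.lhs.toI r = some (Sum.inl f) →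
    symAt? t (m.1 ++ r) = some (Sum.inl f)

/-- Overlap of patterns, in terms of positions and rules. -/
def MarkOverlaps (m n : List ℕ × Rule F ar) : Prop :=
  ∃ r ∈ m.2.lhs.patPos, ∃ r' ∈ n.2.lhs.patPos, m.1 ++ r = n.1 ++ r'

theorem MarkOverlaps.symm {m n : List ℕ × Rule F ar} (h : MarkOverlaps m n) :
    MarkOverlaps n m := by
  obtain ⟨r, hr, r', hr', h⟩ := h
  exact ⟨r', hr', r, hr, h.symm⟩

theorem MarkOverlaps.refl (m : List ℕ × Rule F ar) : MarkOverlaps m m :=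
  ⟨[], m.2.nil_mem_patPos, [], m.2.nil_mem_patPos, rfl⟩

theorem Rdx.overlaps_iff {u v : Rdx F ar} : u.Overlaps v ↔ MarkOverlaps u.mark v.mark := by
  constructor
  · rintro ⟨q, ⟨r, hr, rfl⟩, r', hr', h⟩
    exact ⟨r, hr, r', hr', h⟩
  · rintro ⟨r, hr, r', hr', h⟩
    exact ⟨_, ⟨r, hr, rfl⟩, r', hr', h⟩

theorem Rdx.In.isRedexAt {R : Set (Rule F ar)} {u : Rdx F ar} {t : ITerm F ar}
    (h : u.In R t) : IsRedexAt R t u.mark :=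
  ⟨h.1, fun _ _ => h.symAt?_pattern⟩

theorem IsRedexAt.exists_symAt? {R : Set (Rule F ar)} {t : ITerm F ar}
    {m : List ℕ × Rule F ar} (h : IsRedexAt R t m) : ∃ a, symAt? t m.1 = some a := by
  obtain ⟨f, hf⟩ := m.2.exists_symAt?_lhs_nil
  exact ⟨_, by simpa using h.2 [] f hf⟩

theorem IsRedexAt.exists_in {R : Set (Rule F ar)} (hR : ∀ ρ ∈ R, ρ.LeftLinear)
    {t : ITerm F ar} {m : List ℕ × Rule F ar} (h : IsRedexAt R t m) :
    ∃ u : Rdx F ar, u.In R t ∧ u.mark = m := by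
  obtain ⟨a, ha⟩ := h.exists_symAt?
  obtain ⟨s, hs⟩ := ITerm.exists_subAt? ha
  obtain ⟨σ, rfl⟩ := FTerm.exists_eq_substI (t := s) (hR _ h.1) fun r f hr => by
    rw [← ITerm.symAt?_append hs, h.2 r f hr]
  exact ⟨⟨m.1, m.2, σ⟩, ⟨h.1, hs⟩, rfl⟩

theorem prefix_or_eq_of_not_overlaps {m n : List ℕ × Rule F ar} (hmn : ¬ MarkOverlaps m n)
    {r : List ℕ} {a : F ⊕ ℕ} (hr : symAt? m.2.lhs.toI r = some a)
    (h : n.1 <+: m.1 ++ r) : n.1 <+: m.1 ∨ n.1 = m.1 ++ r := by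
  obtain ⟨w, hw⟩ := h
  rcases List.append_eq_append_iff.1 hw with ⟨c, hc, -⟩ | ⟨c, hc, hrc⟩
  · exact Or.inl ⟨c, hc.symm⟩
  · by_cases hw' : w = []
    · exact Or.inr (by simpa [hw'] using hw)
    · subst hrc
      obtain ⟨f, hf⟩ := ITerm.symAt?_prefix hr hw'
      exact absurd ⟨c, FTerm.mem_patPos_iff.2 ⟨f, hf⟩, [], n.2.nil_mem_patPos, by simp [hc]⟩ hmn

theorem prefix_of_not_overlaps {m n : List ℕ × Rule F ar} (hmn : ¬ MarkOverlaps m n)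
    {r : List ℕ} (hr : r ∈ m.2.lhs.patPos) (h : n.1 <+: m.1 ++ r) : n.1 <+: m.1 := by
  obtain ⟨f, hf⟩ := FTerm.mem_patPos_iff.1 hr
  rcases prefix_or_eq_of_not_overlaps hmn hf h with h | h
  · exact h
  · exact absurd ⟨r, hr, [], n.2.nil_mem_patPos, by simp [h]⟩ hmn

/-- `D` is a set of pairwise non-overlapping redex occurrences of `t`. -/
structure IsMarking (R : Set (Rule F ar)) (t : ITerm F ar) (D : Set (List ℕ × Rule F ar)) :
    Prop where
  isRedexAt : ∀ m ∈ D, IsRedexAt R t m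
  eq_of_overlaps : ∀ m ∈ D, ∀ n ∈ D, MarkOverlaps m n → m = n

theorem IsMarking.mono {R : Set (Rule F ar)} {t : ITerm F ar} {D E : Set (List ℕ × Rule F ar)}
    (h : IsMarking R t D) (hE : E ⊆ D) : IsMarking R t E :=
  ⟨fun m hm => h.isRedexAt m (hE hm), fun m hm n hn => h.eq_of_overlaps m (hE hm) n (hE hn)⟩

theorem IsMarking.rule_eq {R : Set (Rule F ar)} {t : ITerm F ar}
    {D : Set (List ℕ × Rule F ar)} (h : IsMarking R t D) {p : List ℕ} {ρ ρ' : Rule F ar}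
    (hρ : (p, ρ) ∈ D) (hρ' : (p, ρ') ∈ D) : ρ = ρ' :=
  congrArg Prod.snd (h.eq_of_overlaps _ hρ _ hρ'
    ⟨[], ρ.nil_mem_patPos, [], ρ'.nil_mem_patPos, rfl⟩)

/-- The residuals of the redex occurrences in `D` after contraction of `u`. -/
def residualMarks (u : Rdx F ar) (D : Set (List ℕ × Rule F ar)) : Set (List ℕ × Rule F ar) :=
  {m | ∃ q, (q, m.2) ∈ D ∧ m.1 ∈ mapPos u.rule u.pos q}

section Residuals

variable {R : Set (Rule F ar)} {t : ITerm F ar} {D : Set (List ℕ × Rule F ar)} {u : Rdx F ar}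

theorem IsMarking.not_overlaps_of_mem_mapPos (hD : IsMarking R t D) (huD : u.mark ∈ D)
    {q q' : List ℕ} {ρ : Rule F ar} (hq : (q, ρ) ∈ D) (hq' : q' ∈ mapPos u.rule u.pos q) :
    ¬ MarkOverlaps (q, ρ) u.mark := by
  intro h
  obtain rfl : q = u.pos := congrArg Prod.fst (hD.eq_of_overlaps _ hq _ huD h)
  exact not_mem_mapPos_self hq'

theorem IsMarking.append_mem_mapPos (hD : IsMarking R t D) (huD : u.mark ∈ D)
    {q q' r : List ℕ} {ρ : Rule F ar} (hq : (q, ρ) ∈ D) (hq' : q' ∈ mapPos u.rule u.pos q)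
    (hr : r ∈ ρ.lhs.patPos) : q' ++ r ∈ mapPos u.rule u.pos (q ++ r) :=
  _root_.append_mem_mapPos hq'
    (prefix_of_not_overlaps (hD.not_overlaps_of_mem_mapPos huD hq hq') hr)

theorem IsMarking.residualMarks (hR : ∀ ρ ∈ R, ρ.LeftLinear) (hD : IsMarking R t D)
    (hu : u.In R t) (huD : u.mark ∈ D) :
    IsMarking R (u.result t) (residualMarks u D) := by
  constructor
  · rintro ⟨q', ρ⟩ ⟨q, hq, hq'⟩
    refine ⟨(hD.isRedexAt _ hq).1, fun r f hr => ?_⟩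
    rw [hu.symAt?_result_of_mem_mapPos
      (hD.append_mem_mapPos huD hq hq' (FTerm.mem_patPos_iff.2 ⟨f, hr⟩))]
    exact (hD.isRedexAt _ hq).2 r f hr
  · rintro ⟨q₁', ρ₁⟩ ⟨q₁, hq₁, hq₁'⟩ ⟨q₂', ρ₂⟩ ⟨q₂, hq₂, hq₂'⟩ ⟨r₁, hr₁, r₂, hr₂, h⟩
    have h₁ := hD.append_mem_mapPos huD hq₁ hq₁' hr₁
    have h₂ := hD.append_mem_mapPos huD hq₂ hq₂' hr₂
    dsimp only at h h₁ h₂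
    rw [h] at h₁
    have he := eq_of_mem_mapPos (hR _ hu.1) h₁ h₂
    obtain ⟨rfl, rfl⟩ := Prod.ext_iff.1 (hD.eq_of_overlaps _ hq₁ _ hq₂ ⟨r₁, hr₁, r₂, hr₂, he⟩)
    obtain rfl := List.append_cancel_left he
    obtain rfl := List.append_cancel_right h
    rfl

theorem image_mark_residuals (hR : ∀ ρ ∈ R, ρ.LeftLinear) {V : Set (Rdx F ar)}
    (hV : IsMarking R t (Rdx.mark '' V)) (hu : u.In R t) (huV : u ∈ V) :
    Rdx.mark '' residuals R u (V \ {u}) (u.result t) = residualMarks u (Rdx.mark '' V) := by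
  ext ⟨q', ρ⟩
  constructor
  · rintro ⟨v', ⟨v, hv, hrule, hpos, -⟩, h⟩
    obtain ⟨rfl, rfl⟩ := Prod.ext_iff.1 h
    exact ⟨v.pos, ⟨v, hv.1, Prod.ext rfl hrule.symm⟩, hpos⟩
  · intro h
    obtain ⟨v', hv', h'⟩ := ((hV.residualMarks hR hu ⟨u, huV, rfl⟩).isRedexAt _ h).exists_in hR
    obtain ⟨q, ⟨v, hv, hvq⟩, hq'⟩ := h
    obtain ⟨rfl, hvρ⟩ := Prod.ext_iff.1 hvq
    obtain ⟨rfl, rfl⟩ := Prod.ext_iff.1 h'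
    refine ⟨v', ⟨v, ⟨hv, ?_⟩, hvρ.symm, hq', hv'⟩, rfl⟩
    rintro rfl
    exact not_mem_mapPos_self hq'

end Residuals

/-- The points visited when the result of a development is read off: a position of the
developed term, or a position in the right-hand side of a contracted redex occurrence. -/
inductive ReadState (F : Type) (ar : F → ℕ) : Type
  | term : List ℕ → ReadState F ar
  | rhs : List ℕ → Rule F ar → List ℕ → ReadState F ar

/-- `Emits t D st p a`: following the path `p` from the point `st`, and passing through each
redex occurrence in `D` to its right-hand side, one finds the symbol `a`. -/
inductive Emits (t : ITerm F ar) (D : Set (List ℕ × Rule F ar)) :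
    ReadState F ar → List ℕ → F ⊕ ℕ → Prop
  | contract {q ρ p a} : (q, ρ) ∈ D → Emits t D (.rhs q ρ []) p a → Emits t D (.term q) p a
  | subst {q ρ v x r p a} : symAt? ρ.rhs v = some (Sum.inr x) → r ∈ ρ.lhs.varPos x →
      Emits t D (.term (q ++ r)) p a → Emits t D (.rhs q ρ v) p a
  | term_nil {q a} : (∀ ρ, (q, ρ) ∉ D) → symAt? t q = some a → Emits t D (.term q) [] a
  | term_cons {q i b p a} : (∀ ρ, (q, ρ) ∉ D) → symAt? t (q ++ [i]) = some b →
      Emits t D (.term (q ++ [i])) p a → Emits t D (.term q) (i :: p) a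
  | rhs_nil {q ρ v f} : symAt? ρ.rhs v = some (Sum.inl f) →
      Emits t D (.rhs q ρ v) [] (Sum.inl f)
  | rhs_cons {q ρ v i b p a} : symAt? ρ.rhs (v ++ [i]) = some b →
      Emits t D (.rhs q ρ (v ++ [i])) p a → Emits t D (.rhs q ρ v) (i :: p) a

/-- Above all redex occurrences in `D`, the result of the development is the term itself. -/
theorem emits_term_iff_of_length_lt {t : ITerm F ar} {D : Set (List ℕ × Rule F ar)} {d : ℕ}
    (hD : ∀ m ∈ D, d ≤ m.1.length) {p q : List ℕ} (h : q.length + p.length < d) {a : F ⊕ ℕ} :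
    Emits t D (.term q) p a ↔ symAt? t (q ++ p) = some a := by
  have hq : ∀ ρ, (q, ρ) ∉ D := fun ρ hρ => by
    have := hD _ hρ
    dsimp only at this
    omega
  induction p generalizing q with
  | nil =>
    rw [List.append_nil]
    refine ⟨fun he => ?_, .term_nil hq⟩
    cases he with
    | contract hρ => exact absurd hρ (hq _)
    | term_nil _ ha => exact ha
  | cons i p ih =>
    rw [List.length_cons] at h
    have hl : (q ++ [i]).length + p.length < d := by
      rw [List.length_append, List.length_singleton]
      omega
    have hqi : ∀ ρ, (q ++ [i], ρ) ∉ D := fun ρ hρ => by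
      have := hD _ hρ
      dsimp only at this
      omega
    have ih := ih hl hqi
    rw [List.append_assoc, List.singleton_append] at ih
    refine Iff.trans ?_ ih
    constructor
    · intro he
      cases he with
      | contract hρ => exact absurd hρ (hq _)
      | term_cons _ _ he => exact he
    · intro he
      obtain ⟨b, hb⟩ : ∃ b, symAt? t (q ++ [i]) = some b := by
        refine ITerm.symAt?_isSome_prefix (q := p) (a := a) ?_
        simpa using ih.1 he
      exact .term_cons hq hb he

/-- The points of a term corresponding to points of its reduct by contraction of `u`. -/
inductive Simulates (u : Rdx F ar) (D : Set (List ℕ × Rule F ar)) :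
    ReadState F ar → ReadState F ar → Prop
  | mapped {q q'} : q' ∈ mapPos u.rule u.pos q → Simulates u D (.term q) (.term q')
  | root : Simulates u D (.term u.pos) (.term u.pos)
  | contractum {v b} : symAt? u.rule.rhs v = some b →
      Simulates u D (.rhs u.pos u.rule v) (.term (u.pos ++ v))
  | rhs {q q' ρ v} : (q, ρ) ∈ D → q' ∈ mapPos u.rule u.pos q →
      Simulates u D (.rhs q ρ v) (.rhs q' ρ v)

namespace Simulates

variable {R : Set (Rule F ar)} {t : ITerm F ar} {D : Set (List ℕ × Rule F ar)} {u : Rdx F ar}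

theorem append {q q' r : List ℕ} (hq' : q' ∈ mapPos u.rule u.pos q)
    (hr : u.pos <+: q ++ r → u.pos <+: q ∨ u.pos = q ++ r) :
    Simulates u D (.term (q ++ r)) (.term (q' ++ r)) := by
  by_cases hp : u.pos <+: q
  · exact .mapped (append_mem_mapPos hq' fun _ => hp)
  · by_cases he : u.pos = q ++ r
    · rw [eq_of_mem_mapPos_of_not_prefix hq' hp, ← he]
      exact .root
    · exact .mapped (append_mem_mapPos hq' fun h => (hr h).resolve_right he)

theorem child {q q' : List ℕ} (hq' : q' ∈ mapPos u.rule u.pos q) (i : ℕ) :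
    Simulates u D (.term (q ++ [i])) (.term (q' ++ [i])) :=
  append hq' fun h => (List.prefix_concat_iff.1 h).symm

theorem substituted (hD : IsMarking R t D) (huD : u.mark ∈ D) {q q' r : List ℕ} {x : ℕ}
    {ρ : Rule F ar} (hq : (q, ρ) ∈ D) (hq' : q' ∈ mapPos u.rule u.pos q)
    (hr : r ∈ ρ.lhs.varPos x) : Simulates u D (.term (q ++ r)) (.term (q' ++ r)) :=
  append hq' (prefix_or_eq_of_not_overlaps (n := u.mark)
    (hD.not_overlaps_of_mem_mapPos huD hq hq') (FTerm.mem_varPos_iff.1 hr))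

theorem symAt?_isSome_iff (hu : u.In R t) {q q' : List ℕ}
    (h : Simulates u D (.term q) (.term q')) :
    (∃ b, symAt? (u.result t) q' = some b) ↔ ∃ b, symAt? t q = some b := by
  cases h with
  | mapped hq => rw [hu.symAt?_result_of_mem_mapPos hq]
  | root =>
    refine iff_of_true ?_ hu.isRedexAt.exists_symAt?
    rw [ITerm.symAt?_eq_of_subAt? hu.subAt?_result]
    exact ⟨_, ITerm.symAt?_nil _⟩

theorem emits_result (hR : ∀ ρ ∈ R, ρ.LeftLinear) (hD : IsMarking R t D) (hu : u.In R t)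
    (huD : u.mark ∈ D) {st st' : ReadState F ar} {p : List ℕ} {a : F ⊕ ℕ}
    (h : Emits t D st p a) (hs : Simulates u D st st') :
    Emits (u.result t) (residualMarks u D) st' p a := by
  have hfree {q q'} (hq' : q' ∈ mapPos u.rule u.pos q) (hn : ∀ ρ, (q, ρ) ∉ D) :
      ∀ ρ, (q', ρ) ∉ residualMarks u D := by
    rintro ρ ⟨q₂, hq₂, hq₂'⟩
    rw [eq_of_mem_mapPos (hR _ hu.1) hq' hq₂'] at hn
    exact hn ρ hq₂
  induction h generalizing st' with
  | contract hρ _ ih =>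
    cases hs with
    | mapped hq' => exact .contract ⟨_, hρ, hq'⟩ (ih (.rhs hρ hq'))
    | root =>
      obtain rfl := hD.rule_eq hρ huD
      simpa using ih (.contractum (ITerm.symAt?_nil _))
  | subst hv hr _ ih =>
    cases hs with
    | contractum =>
      exact ih (.mapped (Or.inr ⟨_, _, [], _, by simp, hr, hv, by simp⟩))
    | rhs hq hq' => exact .subst hv hr (ih (substituted hD huD hq hq' hr))
  | term_nil hn ha =>
    cases hs with
    | mapped hq' => exact .term_nil (hfree hq' hn) ((hu.symAt?_result_of_mem_mapPos hq').trans ha)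
    | root => exact absurd huD (hn _)
  | @term_cons q i _ _ _ hn hb _ ih =>
    cases hs with
    | mapped hq' =>
      have hc := child (D := D) hq' i
      obtain ⟨b, hb'⟩ := (hc.symAt?_isSome_iff hu).2 ⟨_, hb⟩
      exact .term_cons (hfree hq' hn) hb' (ih hc)
    | root => exact absurd huD (hn _)
  | rhs_nil hf =>
    cases hs with
    | contractum =>
      exact .term_nil (fun ρ ⟨_, _, h⟩ => append_not_mem_mapPos hf h) (hu.symAt?_result_of_app hf)
    | rhs => exact .rhs_nil hf
  | @rhs_cons q ρ v i b p a hb _ ih =>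
    cases hs with
    | contractum =>
      obtain ⟨f, hf⟩ := ITerm.symAt?_prefix hb (List.cons_ne_nil _ _)
      have ih := ih (.contractum hb)
      have hb' : ∃ c, symAt? (u.result t) (u.pos ++ (v ++ [i])) = some c := by
        rcases b with g | x
        · exact ⟨_, hu.symAt?_result_of_app hb⟩
        · rw [ITerm.symAt?_append hu.subAt?_result,
            ITerm.symAt?_eq_of_subAt? (ITerm.subAt?_substI_of_var _ hb)]
          exact ⟨_, ITerm.symAt?_nil _⟩
      obtain ⟨c, hc⟩ := hb'
      rw [← List.append_assoc] at ih hc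
      exact .term_cons (fun ρ ⟨_, _, h⟩ => append_not_mem_mapPos hf h) hc ih
    | rhs hq hq' => exact .rhs_cons hb (ih (.rhs hq hq'))

/-- Silent moves in the contracted redex can be completed until they reach a point that
corresponds to a genuine node of the reduct. -/
theorem exists_reduced (huD : u.mark ∈ D) {st st' : ReadState F ar}
    (hs : Simulates u D st st') :
    ∃ st₂, (∀ p a, Emits t D st₂ p a → Emits t D st p a) ∧
      ((∃ q q', q' ∈ mapPos u.rule u.pos q ∧ st₂ = .term q ∧ st' = .term q') ∨
      (∃ v f, symAt? u.rule.rhs v = some (Sum.inl f) ∧ st₂ = .rhs u.pos u.rule v ∧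
        st' = .term (u.pos ++ v)) ∨
      ∃ q q' ρ v, (q, ρ) ∈ D ∧ q' ∈ mapPos u.rule u.pos q ∧ st₂ = .rhs q ρ v ∧
        st' = .rhs q' ρ v) := by
  have hc {v b} (hv : symAt? u.rule.rhs v = some b) :
      ∃ st₂, (∀ p a, Emits t D st₂ p a → Emits t D (.rhs u.pos u.rule v) p a) ∧
        ((∃ q q', q' ∈ mapPos u.rule u.pos q ∧ st₂ = .term q ∧
          (ReadState.term (u.pos ++ v) : ReadState F ar) = .term q') ∨
        ∃ v' f, symAt? u.rule.rhs v' = some (Sum.inl f) ∧ st₂ = .rhs u.pos u.rule v' ∧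
          (ReadState.term (u.pos ++ v) : ReadState F ar) = .term (u.pos ++ v')) := by
    rcases b with f | x
    · exact ⟨_, fun _ _ => id, Or.inr ⟨v, f, hv, rfl, rfl⟩⟩
    · obtain ⟨r, hr⟩ := u.rule.exists_mem_varPos hv
      exact ⟨_, fun _ _ => .subst hv hr, Or.inl ⟨_, _,
        Or.inr ⟨x, r, [], v, by simp, hr, hv, by simp⟩, rfl, rfl⟩⟩
  cases hs with
  | mapped hq' => exact ⟨_, fun _ _ => id, Or.inl ⟨_, _, hq', rfl, rfl⟩⟩
  | root =>
    obtain ⟨st₂, h₂, h⟩ := hc (ITerm.symAt?_nil u.rule.rhs)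
    rw [List.append_nil] at h
    exact ⟨st₂, fun p a he => .contract huD (h₂ p a he), h.imp_right Or.inl⟩
  | contractum hv =>
    obtain ⟨st₂, h₂, h⟩ := hc hv
    exact ⟨st₂, h₂, h.imp_right Or.inl⟩
  | rhs hq hq' => exact ⟨_, fun _ _ => id, Or.inr (Or.inr ⟨_, _, _, _, hq, hq', rfl, rfl⟩)⟩

theorem emits_of_result (hR : ∀ ρ ∈ R, ρ.LeftLinear) (hD : IsMarking R t D) (hu : u.In R t)
    (huD : u.mark ∈ D) {st st' : ReadState F ar} {p : List ℕ} {a : F ⊕ ℕ}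
    (h : Emits (u.result t) (residualMarks u D) st' p a) (hs : Simulates u D st st') :
    Emits t D st p a := by
  have hfree {q q'} (hq' : q' ∈ mapPos u.rule u.pos q)
      (hn : ∀ ρ, (q', ρ) ∉ residualMarks u D) : ∀ ρ, (q, ρ) ∉ D :=
    fun ρ hρ => hn ρ ⟨q, hρ, hq'⟩
  induction h generalizing st with
  | contract hρ _ ih =>
    obtain ⟨st₂, h₂, ⟨q, q', hq', rfl, he⟩ | ⟨v, f, hf, rfl, he⟩ | ⟨_, _, _, _, _, _, _, he⟩⟩ :=
      hs.exists_reduced (t := t) huD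
    · cases he
      obtain ⟨q₂, hq₂, hq₂'⟩ := hρ
      obtain rfl := eq_of_mem_mapPos (hR _ hu.1) hq' hq₂'
      exact h₂ _ _ (.contract hq₂ (ih (.rhs hq₂ hq')))
    · cases he
      obtain ⟨q₂, -, hq₂'⟩ := hρ
      exact absurd hq₂' (append_not_mem_mapPos hf)
    · cases he
  | subst hv hr _ ih =>
    obtain ⟨st₂, h₂, ⟨_, _, _, _, he⟩ | ⟨_, _, _, _, he⟩ | ⟨q, q', ρ, v, hq, hq', rfl, he⟩⟩ :=
      hs.exists_reduced (t := t) huD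
    · cases he
    · cases he
    · cases he
      exact h₂ _ _ (.subst hv hr (ih (substituted hD huD hq hq' hr)))
  | term_nil hn ha =>
    obtain ⟨st₂, h₂, ⟨q, q', hq', rfl, he⟩ | ⟨v, f, hf, rfl, he⟩ | ⟨_, _, _, _, _, _, _, he⟩⟩ :=
      hs.exists_reduced (t := t) huD
    · cases he
      rw [hu.symAt?_result_of_mem_mapPos hq'] at ha
      exact h₂ _ _ (.term_nil (hfree hq' hn) ha)
    · cases he
      rw [hu.symAt?_result_of_app hf] at ha
      cases ha
      exact h₂ _ _ (.rhs_nil hf)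
    · cases he
  | @term_cons q₀ i b _ _ hn hb _ ih =>
    obtain ⟨st₂, h₂, ⟨q, q', hq', rfl, he⟩ | ⟨v, f, hf, rfl, he⟩ | ⟨_, _, _, _, _, _, _, he⟩⟩ :=
      hs.exists_reduced (t := t) huD
    · cases he
      have hc := child (D := D) hq' i
      obtain ⟨b, hb'⟩ := (hc.symAt?_isSome_iff hu).1 ⟨_, hb⟩
      exact h₂ _ _ (.term_cons (hfree hq' hn) hb' (ih hc))
    · cases he
      rw [List.append_assoc, ITerm.symAt?_append hu.subAt?_result] at hb
      have hv : ∃ b, symAt? u.rule.rhs (v ++ [i]) = some b := by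
        rcases ITerm.symAt?_substI_cases hb with ⟨g, hg⟩ | ⟨x, v₁, w, hw, hx⟩
        · exact ⟨_, hg⟩
        · rcases List.prefix_concat_iff.1 ⟨w, hw.symm⟩ with rfl | ⟨c, rfl⟩
          · exact ⟨_, hx⟩
          · obtain rfl := ITerm.append_eq_of_var hx hf
            simp [hx] at hf
      obtain ⟨b', hb'⟩ := hv
      refine h₂ _ _ (.rhs_cons hb' (ih ?_))
      rw [List.append_assoc]
      exact .contractum hb'
    · cases he
  | rhs_nil hf =>
    obtain ⟨st₂, h₂, ⟨_, _, _, _, he⟩ | ⟨_, _, _, _, he⟩ | ⟨q, q', ρ, v, hq, hq', rfl, he⟩⟩ :=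
      hs.exists_reduced (t := t) huD
    · cases he
    · cases he
    · cases he
      exact h₂ _ _ (.rhs_nil hf)
  | rhs_cons hb _ ih =>
    obtain ⟨st₂, h₂, ⟨_, _, _, _, he⟩ | ⟨_, _, _, _, he⟩ | ⟨q, q', ρ, v, hq, hq', rfl, he⟩⟩ :=
      hs.exists_reduced (t := t) huD
    · cases he
    · cases he
    · cases he
      exact h₂ _ _ (.rhs_cons hb (ih (.rhs hq hq')))

/-- Contracting a redex of a marking does not change what is read off from the root. -/
theorem emits_iff (hR : ∀ ρ ∈ R, ρ.LeftLinear) (hD : IsMarking R t D) (hu : u.In R t)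
    (huD : u.mark ∈ D) {p : List ℕ} {a : F ⊕ ℕ} :
    Emits (u.result t) (residualMarks u D) (.term []) p a ↔ Emits t D (.term []) p a := by
  have hs : Simulates u D (.term []) (.term []) := by
    by_cases h : u.pos <+: []
    · have := Simulates.root (u := u) (D := D)
      rwa [List.prefix_nil.1 h] at this
    · exact .mapped (Or.inl ⟨h, rfl⟩)
  exact ⟨fun h => emits_of_result hR hD hu huD h hs, fun h => emits_result hR hD hu huD h hs⟩

end Simulates

/-- The result of a complete development is the term read off from the initial marking. -/
theorem CompDev.symAt?_eq_some_iff {R : Set (Rule F ar)} (hR : ∀ ρ ∈ R, ρ.LeftLinear)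
    {t s : ITerm F ar} {U : Set (Rdx F ar)} (hU : IsMarking R t (Rdx.mark '' U))
    (h : CompDev R t U s) {p : List ℕ} {a : F ⊕ ℕ} :
    symAt? s p = some a ↔ Emits t (Rdx.mark '' U) (.term []) p a := by
  obtain ⟨g, Us, rfl, rfl, hstep, hdepth, hconv⟩ := h
  have hinv : ∀ n, IsMarking R (g n) (Rdx.mark '' Us n) ∧
      (Emits (g n) (Rdx.mark '' Us n) (.term []) p a ↔
        Emits (g 0) (Rdx.mark '' Us 0) (.term []) p a) := by
    intro n
    induction n with
    | zero => exact ⟨hU, Iff.rfl⟩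
    | succ n ih =>
      rcases hstep n with ⟨h₀, hg, h₁⟩ | ⟨u, hu, huin, hg, hUs⟩
      · rw [hg, h₁, ← h₀]
        exact ih
      · rw [hUs, hg, image_mark_residuals hR ih.1 huin hu]
        exact ⟨ih.1.residualMarks hR huin ⟨u, hu, rfl⟩,
          (Simulates.emits_iff hR ih.1 huin ⟨u, hu, rfl⟩).trans ih.2⟩
  obtain ⟨N₁, hN₁⟩ := hdepth (p.length + 1)
  obtain ⟨N₂, hN₂⟩ := hconv (p.length + 1)
  rw [← hN₂ _ (le_max_right N₁ N₂) p (Nat.lt_succ_self _), ← (hinv (max N₁ N₂)).2,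
    emits_term_iff_of_length_lt (d := p.length + 1) _ (by simp), List.nil_append]
  rintro _ ⟨u, hu, rfl⟩
  exact hN₁ _ (le_max_left N₁ N₂) u hu

/-- Overlap of members of `K`. -/
def OverlapsWithin (K : Set (List ℕ × Rule F ar)) (a b : List ℕ × Rule F ar) : Prop :=
  a ∈ K ∧ b ∈ K ∧ MarkOverlaps a b

theorem OverlapsWithin.mono {K L : Set (List ℕ × Rule F ar)} (h : K ⊆ L)
    {a b : List ℕ × Rule F ar} (hab : Relation.ReflTransGen (OverlapsWithin K) a b) :
    Relation.ReflTransGen (OverlapsWithin L) a b :=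
  Relation.ReflTransGen.mono (fun _ _ hab => ⟨h hab.1, h hab.2.1, hab.2.2⟩) _ _ hab

theorem OverlapsWithin.symm {K : Set (List ℕ × Rule F ar)} {a b : List ℕ × Rule F ar}
    (hab : Relation.ReflTransGen (OverlapsWithin K) a b) :
    Relation.ReflTransGen (OverlapsWithin K) b a := by
  induction hab with
  | refl => exact .refl
  | tail _ h ih => exact .head ⟨h.2.1, h.1, h.2.2.symm⟩ ih

/-- A set of redex occurrences connected by overlaps, two of which are at disjoint positions. -/
structure IsYCluster (R : Set (Rule F ar)) (t : ITerm F ar) (K : Set (List ℕ × Rule F ar)) :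
    Prop where
  isRedexAt : ∀ k ∈ K, IsRedexAt R t k
  connected : ∀ a ∈ K, ∀ b ∈ K, Relation.ReflTransGen (OverlapsWithin K) a b
  exists_disjPos : ∃ a ∈ K, ∃ b ∈ K, DisjPos a.1 b.1

theorem exists_finite_connected {R : Set (Rule F ar)} {t : ITerm F ar} {u v : Rdx F ar}
    (hu : u.In R t) (h : Relation.ReflTransGen (OverlapIn R t) u v) :
    ∃ K : Set (List ℕ × Rule F ar), K.Finite ∧ (∀ k ∈ K, IsRedexAt R t k) ∧ v.mark ∈ K ∧
      ∀ k ∈ K, Relation.ReflTransGen (OverlapsWithin K) u.mark k := by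
  induction h with
  | refl =>
    refine ⟨{u.mark}, Set.finite_singleton _, ?_, rfl, ?_⟩
    · rintro _ rfl
      exact hu.isRedexAt
    · rintro _ rfl
      exact .refl
  | @tail v w _ hvw ih =>
    obtain ⟨K, hfin, hred, hv, hconn⟩ := ih
    have hsub := Set.subset_insert w.mark K
    refine ⟨insert w.mark K, hfin.insert _, ?_, Set.mem_insert _ _, ?_⟩
    · rintro k (rfl | hk)
      · exact hvw.2.1.isRedexAt
      · exact hred k hk
    · rintro k (rfl | hk)
      · exact (OverlapsWithin.mono hsub (hconn _ hv)).tail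
          ⟨hsub hv, Set.mem_insert _ _, Rdx.overlaps_iff.1 hvw.2.2⟩
      · exact OverlapsWithin.mono hsub (hconn k hk)

theorem YRedex.exists_isYCluster {R : Set (Rule F ar)} {t : ITerm F ar} {u : Rdx F ar}
    (h : YRedex R t u) :
    ∃ K : Set (List ℕ × Rule F ar), K.Finite ∧ IsYCluster R t K ∧
      ∃ k ∈ K, MarkOverlaps u.mark k := by
  obtain ⟨hu, v₁, v₂, -, -, h₁, h₂, hdisj⟩ := h
  obtain ⟨K₁, hfin₁, hred₁, hv₁, hconn₁⟩ := exists_finite_connected hu h₁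
  obtain ⟨K₂, hfin₂, hred₂, hv₂, hconn₂⟩ := exists_finite_connected hu h₂
  have hconn : ∀ k ∈ K₁ ∪ K₂, Relation.ReflTransGen (OverlapsWithin (K₁ ∪ K₂)) u.mark k := by
    rintro k (hk | hk)
    · exact OverlapsWithin.mono Set.subset_union_left (hconn₁ k hk)
    · exact OverlapsWithin.mono Set.subset_union_right (hconn₂ k hk)
  refine ⟨K₁ ∪ K₂, hfin₁.union hfin₂, ⟨?_, ?_, _, Or.inl hv₁, _, Or.inr hv₂, hdisj⟩, ?_⟩
  · rintro k (hk | hk)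
    · exact hred₁ k hk
    · exact hred₂ k hk
  · exact fun a ha b hb => (OverlapsWithin.symm (hconn a ha)).trans (hconn b hb)
  · rcases (hconn _ (Or.inl hv₁)).cases_head with h | ⟨c, hc, -⟩
    · exact ⟨v₁.mark, Or.inl hv₁, h ▸ MarkOverlaps.refl _⟩
    · exact ⟨c, hc.2.1, hc.2.2⟩

theorem WeaklyOrthogonal.result_eq_of_connected {R : Set (Rule F ar)} (hR : WeaklyOrthogonal R)
    {t : ITerm F ar} {K : Set (List ℕ × Rule F ar)} (hK : ∀ k ∈ K, IsRedexAt R t k)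
    {u v : Rdx F ar} (hu : u.In R t) (hv : v.In R t)
    (h : Relation.ReflTransGen (OverlapsWithin K) u.mark v.mark) : u.result t = v.result t := by
  generalize ha : u.mark = a at h
  induction h using Relation.ReflTransGen.head_induction_on generalizing u with
  | refl => exact hR.2 t u v hu hv (Rdx.overlaps_iff.2 (ha ▸ MarkOverlaps.refl _))
  | head hab _ ih =>
    obtain ⟨w, hw, rfl⟩ := (hK _ hab.2.1).exists_in hR.1
    exact (hR.2 t u w hu hw (Rdx.overlaps_iff.2 (ha ▸ hab.2.2))).trans (ih hw rfl)

namespace IsYCluster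

variable {R : Set (Rule F ar)} {t : ITerm F ar} {K D : Set (List ℕ × Rule F ar)} {u : Rdx F ar}

theorem insert_of_overlaps (hK : IsYCluster R t K) {m k : List ℕ × Rule F ar}
    (hm : IsRedexAt R t m) (hk : k ∈ K) (hmk : MarkOverlaps m k) :
    IsYCluster R t (insert m K) := by
  have hsub := Set.subset_insert m K
  have hconn : ∀ a ∈ insert m K, Relation.ReflTransGen (OverlapsWithin (insert m K)) a k := by
    rintro a (rfl | ha)
    · exact .single ⟨Set.mem_insert _ _, hsub hk, hmk⟩
    · exact OverlapsWithin.mono hsub (hK.connected a ha k hk)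
  obtain ⟨a, ha, b, hb, hab⟩ := hK.exists_disjPos
  refine ⟨?_, fun a ha b hb => (hconn a ha).trans (OverlapsWithin.symm (hconn b hb)),
    a, hsub ha, b, hsub hb, hab⟩
  rintro a (rfl | ha)
  · exact hm
  · exact hK.isRedexAt a ha

/-- Contracting a Y-redex leaves the term unchanged. -/
theorem result_eq_self (hK : IsYCluster R t K) (hR : WeaklyOrthogonal R) (hu : u.In R t)
    (huK : u.mark ∈ K) : u.result t = t := by
  obtain ⟨a, ha, b, hb, hab⟩ := hK.exists_disjPos
  obtain ⟨v, hv, rfl⟩ := (hK.isRedexAt a ha).exists_in hR.1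
  obtain ⟨w, hw, rfl⟩ := (hK.isRedexAt b hb).exists_in hR.1
  refine ITerm.ext_symAt? fun p => ?_
  by_cases hp : v.pos <+: p
  · rw [hR.result_eq_of_connected hK.isRedexAt hu hw (hK.connected _ huK _ hb)]
    refine w.symAt?_result_of_not_prefix t fun hp' => ?_
    exact (List.prefix_or_prefix_of_prefix hp hp').elim hab.1 hab.2
  · rw [hR.result_eq_of_connected hK.isRedexAt hu hv (hK.connected _ huK _ ha)]
    exact v.symAt?_result_of_not_prefix t hp

/-- A redex occurrence `n` below a member of the cluster, and overlapping none of them, is not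
above a pattern position of a member. -/
theorem not_prefix_append (hK : IsYCluster R t K) (huK : u.mark ∈ K) {n : List ℕ × Rule F ar}
    (hn : ∀ k ∈ K, ¬ MarkOverlaps k n) (hun : u.pos <+: n.1) {k : List ℕ × Rule F ar}
    (hk : k ∈ K) {r : List ℕ} (hr : r ∈ k.2.lhs.patPos) : ¬ n.1 <+: k.1 ++ r := by
  suffices h : ¬ n.1 <+: k.1 from fun h' => h (prefix_of_not_overlaps (hn k hk) hr h')
  clear hr
  induction hK.connected _ huK k hk with
  | refl =>
    intro h
    have he : u.mark.1 = n.1 := hun.eq_of_length_le h.length_le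
    exact hn _ huK ⟨[], u.rule.nil_mem_patPos, [], n.2.nil_mem_patPos, by rw [he]⟩
  | @tail k k' _ hkk' ih =>
    intro h
    obtain ⟨hk, -, r, hr, r', hr', he⟩ := hkk'
    exact ih hk (prefix_of_not_overlaps (hn k hk) hr (he ▸ h.trans (List.prefix_append _ _)))

/-- Contracting a member of the cluster neither moves nor copies nor erases a redex occurrence
that overlaps no member. -/
theorem mapPos_eq_singleton (hK : IsYCluster R t K) (hR : WeaklyOrthogonal R)
    (huK : u.mark ∈ K) {n : List ℕ × Rule F ar} (hnt : IsRedexAt R t n)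
    (hn : u.pos <+: n.1 → ∀ k ∈ K, ¬ MarkOverlaps k n) :
    mapPos u.rule u.pos n.1 = {n.1} := by
  by_cases hun : u.pos <+: n.1
  swap
  · ext q'
    exact ⟨fun h => eq_of_mem_mapPos_of_not_prefix h hun, fun h => Or.inl ⟨hun, h⟩⟩
  replace hn := hn hun
  obtain ⟨_, ha⟩ := hnt.exists_symAt?
  obtain ⟨s, hs⟩ := ITerm.exists_subAt? ha
  let T (z : ℕ) : ITerm F ar := replaceAt t n.1 (FTerm.var z).toI
  have hT (z) : symAt? (T z) n.1 = some (Sum.inr z) := by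
    rw [ITerm.symAt?_eq_of_subAt? (ITerm.subAt?_replaceAt_self _ hs), FTerm.symAt?_toI_var_nil]
  have hT_unique {q} (hq : ∀ z, symAt? (T z) q = some (Sum.inr z)) : q = n.1 := by
    by_cases h : n.1 <+: q
    · obtain ⟨c, rfl⟩ := h
      rw [ITerm.append_eq_of_var (hT 0) (hq 0), List.append_nil]
    · have h₀ := hq 0
      have h₁ := hq 1
      rw [ITerm.symAt?_replaceAt_of_not_prefix _ _ h] at h₀ h₁
      simp [h₀] at h₁
  have hTK (z) : IsYCluster R (T z) K := by
    refine ⟨fun k hk => ⟨(hK.isRedexAt k hk).1, fun r f hr => ?_⟩, hK.connected,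
      hK.exists_disjPos⟩
    rw [ITerm.symAt?_replaceAt_of_not_prefix _ _
      (hK.not_prefix_append huK hn hun hk (FTerm.mem_patPos_iff.2 ⟨f, hr⟩))]
    exact (hK.isRedexAt k hk).2 r f hr
  have hTu (z) : ∃ v : Rdx F ar, v.In R (T z) ∧ v.pos = u.pos ∧ v.rule = u.rule ∧
      v.result (T z) = T z := by
    obtain ⟨v, hv, he⟩ := ((hTK z).isRedexAt _ huK).exists_in hR.1
    obtain ⟨h₁, h₂⟩ := Prod.ext_iff.1 he
    exact ⟨v, hv, h₁, h₂, (hTK z).result_eq_self hR hv (he ▸ huK)⟩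
  ext q'
  constructor
  · intro hq'
    refine hT_unique fun z => ?_
    obtain ⟨v, hv, hpos, hrule, hres⟩ := hTu z
    rw [← hpos, ← hrule] at hq'
    rw [← hT z, ← hv.symAt?_result_of_mem_mapPos hq', hres]
  · rintro rfl
    obtain ⟨c, hc⟩ := hun
    obtain ⟨v, hv, hpos, hrule, hres⟩ := hTu 0
    have h₀ := hT 0
    rw [← hres, ← hc, ← hpos] at h₀
    have h₁ := h₀
    rw [ITerm.symAt?_append hv.subAt?_result] at h₁
    rcases ITerm.symAt?_substI_cases h₁ with ⟨f, hf⟩ | ⟨x, r', d, rfl, hx⟩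
    · simp [hv.symAt?_result_of_app hf] at h₀
    · rw [hrule] at hx
      obtain ⟨r, hr⟩ := u.rule.exists_mem_varPos hx
      have hd : u.pos ++ r' ++ d = n.1 := by rw [← hc, List.append_assoc]
      refine Or.inr ⟨x, r, d, r', (hT_unique fun z => ?_).symm, hr, hx, hd.symm⟩
      obtain ⟨v, hv, hpos, hrule, hres⟩ := hTu z
      rw [← hrule] at hr hx
      rw [← hT z, ← hd, ← hpos, ← hv.symAt?_result_of_var hr hx d, hres]

theorem finite_overlapping (hK : K.Finite) (hD : IsMarking R t D) :
    {m ∈ D | ∃ k ∈ K, MarkOverlaps m k}.Finite := by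
  have h : (⋃ k ∈ K, ⋃ r ∈ k.2.lhs.patPos,
      {m ∈ D | ∃ r' ∈ m.2.lhs.patPos, m.1 ++ r' = k.1 ++ r}).Finite := by
    refine hK.biUnion fun k _ => k.2.lhs.patPos_finite.biUnion fun r _ => ?_
    refine Set.Subsingleton.finite ?_
    rintro m ⟨hm, a, ha, hma⟩ n ⟨hn, b, hb, hnb⟩
    exact hD.eq_of_overlaps m hm n hn ⟨a, ha, b, hb, hma.trans hnb.symm⟩
  refine h.subset ?_
  rintro m ⟨hm, k, hk, r', hr', r, hr, he⟩
  simp only [Set.mem_iUnion]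
  exact ⟨k, hk, r, hr, hm, r', hr', he⟩

/-- An innermost marked redex occurrence in the cluster can be dropped from the marking. -/
theorem emits_diff_singleton_iff (hK : IsYCluster R t K) (hR : WeaklyOrthogonal R)
    (hD : IsMarking R t D) {m : List ℕ × Rule F ar} (hm : m ∈ D) (hmK : m ∈ K)
    (hn : ∀ n ∈ D, n ≠ m → m.1 <+: n.1 → ∀ k ∈ K, ¬ MarkOverlaps k n) {p : List ℕ}
    {a : F ⊕ ℕ} : Emits t (D \ {m}) (.term []) p a ↔ Emits t D (.term []) p a := by
  obtain ⟨u, hu, rfl⟩ := (hD.isRedexAt m hm).exists_in hR.1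
  rw [← Simulates.emits_iff hR.1 hD hu hm, hK.result_eq_self hR hu hmK]
  have hmap {n} (hnD : n ∈ D) (hne : n ≠ u.mark) : mapPos u.rule u.pos n.1 = {n.1} :=
    hK.mapPos_eq_singleton hR hmK (hD.isRedexAt n hnD) (hn n hnD hne)
  suffices h : residualMarks u D = D \ {u.mark} by rw [h]
  ext ⟨q', ρ⟩
  constructor
  · rintro ⟨q, hq, hq'⟩
    by_cases hne : (q, ρ) = u.mark
    · obtain rfl : q = u.pos := congrArg Prod.fst hne
      exact absurd hq' not_mem_mapPos_self
    · dsimp only at hq hq'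
      have := hmap hq hne
      dsimp only at this
      rw [this] at hq'
      obtain rfl := hq'
      exact ⟨hq, hne⟩
  · rintro ⟨hq, hne⟩
    exact ⟨q', hq, (hmap hq hne).symm ▸ rfl⟩

/-- All marked redex occurrences overlapping a finite cluster can be dropped from the marking. -/
theorem emits_diff_overlapping_iff (hK : IsYCluster R t K) (hfin : K.Finite)
    (hR : WeaklyOrthogonal R) (hD : IsMarking R t D) {p : List ℕ} {a : F ⊕ ℕ} :
    Emits t {m ∈ D | ∀ k ∈ K, ¬ MarkOverlaps m k} (.term []) p a ↔
      Emits t D (.term []) p a := by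
  induction hc : {m ∈ D | ∃ k ∈ K, MarkOverlaps m k}.ncard using Nat.strong_induction_on
    generalizing D with
  | _ c ih =>
    have hDfin := finite_overlapping hfin hD
    rcases {m ∈ D | ∃ k ∈ K, MarkOverlaps m k}.eq_empty_or_nonempty with he | hne
    · suffices h : {m ∈ D | ∀ k ∈ K, ¬ MarkOverlaps m k} = D by rw [h]
      refine Set.sep_eq_self_iff_mem_true.2 fun m hm k hk hmk => ?_
      exact Set.eq_empty_iff_forall_notMem.1 he m ⟨hm, k, hk, hmk⟩
    · obtain ⟨m, ⟨hm, k, hk, hmk⟩, hmax⟩ :=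
        Set.exists_max_image _ (fun m => m.1.length) hDfin hne
      have hlt : {n ∈ D \ {m} | ∃ k ∈ K, MarkOverlaps n k}.ncard < c := by
        rw [← hc]
        refine Set.ncard_lt_ncard ⟨fun n hn => ⟨hn.1.1, hn.2⟩, fun h => ?_⟩ hDfin
        exact (h ⟨hm, k, hk, hmk⟩).1.2 rfl
      rw [← (hK.insert_of_overlaps (hD.isRedexAt m hm) hk hmk).emits_diff_singleton_iff hR hD hm
        (Set.mem_insert _ _), ← ih _ hlt (hD.mono Set.sdiff_subset) rfl]
      · suffices h : {m ∈ D | ∀ k ∈ K, ¬ MarkOverlaps m k} =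
            {n ∈ D \ {m} | ∀ k ∈ K, ¬ MarkOverlaps n k} by rw [h]
        ext n
        refine ⟨fun hn => ⟨⟨hn.1, ?_⟩, hn.2⟩, fun hn => ⟨hn.1.1, hn.2⟩⟩
        rintro rfl
        exact hn.2 k hk hmk
      · rintro n hn hne hmn k' (rfl | hk') hov
        · exact hne (hD.eq_of_overlaps _ hm n hn hov).symm
        · have he := hmn.eq_of_length_le (hmax n ⟨hn, k', hk', hov.symm⟩)
          exact hne (hD.eq_of_overlaps n hn m hm
            ⟨[], n.2.nil_mem_patPos, [], m.2.nil_mem_patPos, by rw [he]⟩)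

end IsYCluster

theorem isMarking_image_mark {R : Set (Rule F ar)} {t : ITerm F ar} {U : Set (Rdx F ar)}
    (hU : ∀ u ∈ U, u.In R t) (hnov : ∀ u ∈ U, ∀ v ∈ U, u ≠ v → ¬ u.Overlaps v) :
    IsMarking R t (Rdx.mark '' U) := by
  constructor
  · rintro _ ⟨u, hu, rfl⟩
    exact (hU u hu).isRedexAt
  · rintro _ ⟨u, hu, rfl⟩ _ ⟨v, hv, rfl⟩ h
    by_contra hne
    exact hnov u hu v hv (fun he => hne (he ▸ rfl)) (Rdx.overlaps_iff.2 h)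

/-- in a weakly orthogonal TRS, for a set `U` of pairwise
non-overlapping redexes of `t` and a Y-redex `u₀ ∈ U`, complete developments
of `U` and of `U \ {u₀}` result in the same term. -/
theorem statement16 {F : Type} {ar : F → ℕ} (R : Set (Rule F ar))
    (hWO : WeaklyOrthogonal R) (t : ITerm F ar) (U : Set (Rdx F ar))
    (hU : ∀ u ∈ U, u.In R t)
    (hnov : ∀ u ∈ U, ∀ v ∈ U, u ≠ v → ¬ u.Overlaps v)
    (u₀ : Rdx F ar) (hu₀ : u₀ ∈ U) (hY : YRedex R t u₀)
    (s s' : ITerm F ar)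
    (h : CompDev R t U s) (h' : CompDev R t (U \ {u₀}) s') :
    s = s' := by
  have hD := isMarking_image_mark hU hnov
  have hD' : IsMarking R t (Rdx.mark '' (U \ {u₀})) := hD.mono (Set.image_mono Set.sdiff_subset)
  obtain ⟨K, hfin, hK, k, hk, hu₀k⟩ := hY.exists_isYCluster
  have hW : {m ∈ Rdx.mark '' U | ∀ k ∈ K, ¬ MarkOverlaps m k} =
      {m ∈ Rdx.mark '' (U \ {u₀}) | ∀ k ∈ K, ¬ MarkOverlaps m k} := by
    ext m
    constructor
    · rintro ⟨⟨u, hu, rfl⟩, hm⟩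
      refine ⟨⟨u, ⟨hu, ?_⟩, rfl⟩, hm⟩
      rintro rfl
      exact hm k hk hu₀k
    · rintro ⟨⟨u, hu, rfl⟩, hm⟩
      exact ⟨⟨u, hu.1, rfl⟩, hm⟩
  refine ITerm.ext_symAt? fun p => Option.ext fun a => ?_
  rw [h.symAt?_eq_some_iff hWO.1 hD, h'.symAt?_eq_some_iff hWO.1 hD',
    ← hK.emits_diff_overlapping_iff hfin hWO hD, ← hK.emits_diff_overlapping_iff hfin hWO hD', hW]
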